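/- For all integers r,q ≥ 1 (note N = 2(r+1)(q+1) − 1 is symmetric in r and q), the permutations σ_{rq} and σ_{qr} are trivially equivalent under rotation composed with inversion: σ_{qr} = κ ∘ σ_{rq}^{−1} ∘ κ, where κ is the flip involution κ(a) = N+1−a of {1,…,N}; equivalently, σ_{qr}(a) = N+1 − σ_{rq}^{−1}(N+1−a) for all 1 ≤ a ≤ N. -/

import Mathlib

/-- Morse numbers `i_j` of a permutation `σ` of `{1,…,N}` (extended to `ℕ`),
via the recursion `i_1 = 0`,
`i_{j+1} = i_j + (-1)^(j+1) * sign (σ⁻¹(j+1) - σ⁻¹(j))`. -/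
def morse (σ : Equiv.Perm ℕ) : ℕ → ℤ
  | 0 => 0
  | 1 => 0
  | (j+2) => morse σ (j+1) +
      (-1)^(j+2) * Int.sign ((σ.symm (j+2) : ℤ) - (σ.symm (j+1) : ℤ))

/-- Zero numbers `z_{j k}`, recursion in the first index `j`, second index `k` fixed:
`z_{1k} = 0`, `z_{kk} = i_k`, `z_{k+1,k} = min (i_k, i_{k+1})`, and otherwise
`z_{j+1,k} = z_{jk} + ((-1)^(j+1)/2) * (sign (σ⁻¹(j+1) - σ⁻¹(k)) - sign (σ⁻¹(j) - σ⁻¹(k)))`. -/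
def zrec (σ : Equiv.Perm ℕ) (k : ℕ) : ℕ → ℤ
  | 0 => 0
  | 1 => 0
  | (j+2) =>
      if j+2 = k then morse σ k
      else if j+1 = k then min (morse σ k) (morse σ (k+1))
      else zrec σ k (j+1) +
        ((-1)^(j+2) * (Int.sign ((σ.symm (j+2) : ℤ) - (σ.symm k : ℤ))
          - Int.sign ((σ.symm (j+1) : ℤ) - (σ.symm k : ℤ)))) / 2

/-- The zero number `z_{m n}`. -/
def zfun (σ : Equiv.Perm ℕ) (m n : ℕ) : ℤ := zrec σ n m

/-- The connection digraph of a dissipative Morse permutation `σ` of `{1,…,N}`: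
an edge `m ⤳ n` iff `i_m = i_n + 1` and no `w` strictly between `m` and `n`
blocks, i.e. satisfies `z_{mw} = z_{wn} = z_{mn}`. -/
def hasEdge (N : ℕ) (σ : Equiv.Perm ℕ) (m n : ℕ) : Prop :=
  1 ≤ m ∧ m ≤ N ∧ 1 ≤ n ∧ n ≤ N ∧
  morse σ m = morse σ n + 1 ∧
  ¬ ∃ w : ℕ, min m n < w ∧ w < max m n ∧
      zfun σ m w = zfun σ w n ∧ zfun σ w n = zfun σ m n

/-- A dissipative permutation of `{1,…,N}`. -/
def Dissipative (N : ℕ) (σ : Equiv.Perm ℕ) : Prop :=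
  Set.BijOn σ (Set.Icc 1 N) (Set.Icc 1 N) ∧ σ 1 = 1 ∧ σ N = N

/-- The Morse property: all Morse numbers are nonnegative. -/
def MorseProp (N : ℕ) (σ : Equiv.Perm ℕ) : Prop :=
  ∀ j, 1 ≤ j → j ≤ N → 0 ≤ morse σ j

/-- Morse counts `μ(i) = #{j ∈ {1,…,N} : i_j = i}`. -/
def morseCount (N : ℕ) (σ : Equiv.Perm ℕ) (i : ℤ) : ℕ :=
  ((Finset.Icc 1 N).filter (fun j => morse σ j = i)).card

/-- The primitive 3-nose permutation `σ_{rq}` of `{1,…,N}`, `N = 2(r+1)(q+1)-1`,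
characterized by its defining relations, extended to a permutation of `ℕ`
fixing everything outside `{1,…,N}`. -/
def SigmaRQ (r q : ℕ) (σ : Equiv.Perm ℕ) : Prop :=
  (∀ a, a ∉ Set.Icc 1 (2*(r+1)*(q+1) - 1) → σ a = a) ∧
  (∀ j k, j ≤ r → k ≤ q →
    σ (2*((q+1)*j+k)+1) = 2*(j+(r+1)*k)+1) ∧
  (∀ j k, j ≤ r → k ≤ q → ¬(j = 0 ∧ k = 0) →
    σ (2*((q+1)*(r-j)+(q-k)+1)) = 2*(j+(r+1)*k))

/-- Tags `A`, `B` of equilibrium labels `A^j_k`, `B^j_k`. -/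
inductive Tag | A | B
deriving DecidableEq

/-- The axis position (`h_1`-position) of the label `L^j_k` for parameters `(r,q)`. -/
def axisPos (r q : ℕ) : Tag → ℕ → ℕ → ℕ
  | Tag.A, j, k => if Odd j then (q+1)*(j-1)+k+1 else (q+1)*(2*r+1-j)+(q-k)+1
  | Tag.B, j, k => if Odd j then (q+1)*j+(q-k)+1 else (q+1)*(2*r-j)+k+1

/-- The meander position (`h_0`-position) of the label `L^j_k` for parameters `(r,q)`. -/
def meanderPos (r q : ℕ) : Tag → ℕ → ℕ → ℕ
  | Tag.A, j, k => if Odd k then (r+1)*(2*q+1-k)+(2*r+1-j) else (r+1)*k+j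
  | Tag.B, j, k => if Odd k then (r+1)*(2*q+1-k)+j else (r+1)*(k+1)+(r-j)

/-- The suspension `σ̃` of a dissipative permutation `σ` of `{1,…,N}`:
`σ̃(1) = 1`, `σ̃(N+2) = N+2`, and `σ̃(a+1) = N+2 - σ(a)` for `1 ≤ a ≤ N`. -/
def IsSuspension (N : ℕ) (σ σt : Equiv.Perm ℕ) : Prop :=
  σt 1 = 1 ∧ σt (N+2) = N+2 ∧ ∀ a, 1 ≤ a → a ≤ N → σt (a+1) = N+2 - σ a

/-- The label `A^0_0` is the distinguished (formal) vertex `⋆`. -/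
def IsStar (L : Tag) (j k : ℕ) : Prop := L = Tag.A ∧ j = 0 ∧ k = 0

/-- Tag swap `A ↔ B`, used by the reversor. -/
def tagSwap : Tag → Tag
  | Tag.A => Tag.B
  | Tag.B => Tag.A

/-- trivial equivalence `σ_{qr} = κ ∘ σ_{rq}⁻¹ ∘ κ`, i.e.
`σ_{qr}(a) = N+1 - σ_{rq}⁻¹(N+1-a)` for all `1 ≤ a ≤ N`. -/
theorem stmt_5 (r q : ℕ) (hr : 1 ≤ r) (hq : 1 ≤ q)
    (σ σ' : Equiv.Perm ℕ) (hσ : SigmaRQ r q σ) (hσ' : SigmaRQ q r σ') :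
    ∀ a, 1 ≤ a → a ≤ 2*(r+1)*(q+1)-1 →
      σ' a = 2*(r+1)*(q+1) - σ.symm (2*(r+1)*(q+1) - a) := by
  intro a ha1 ha2
  obtain ⟨-, ho, he⟩ := hσ
  obtain ⟨-, ho', he'⟩ := hσ'
  have hM : 2*(r+1)*(q+1) = 2*((r+1)*(q+1)) := by ring
  rw [hM] at ha2 ⊢
  -- decompose `m < (r+1)(q+1)` as `(r+1) j + k`
  have dec : ∀ m, m < (r+1)*(q+1) → ∃ j k, j ≤ q ∧ k ≤ r ∧ m = (r+1)*j+k := by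
    intro m hm
    refine ⟨m/(r+1), m%(r+1), ?_, ?_, (Nat.div_add_mod m (r+1)).symm⟩
    · exact Nat.lt_succ_iff.mp (Nat.div_lt_of_lt_mul hm)
    · exact Nat.lt_succ_iff.mp (Nat.mod_lt _ (Nat.succ_pos r))
  -- it suffices to exhibit the preimage
  have key : ∀ b, b ≤ 2*((r+1)*(q+1)) → σ' a = b →
      σ (2*((r+1)*(q+1)) - b) = 2*((r+1)*(q+1)) - a →
      σ' a = 2*((r+1)*(q+1)) - σ.symm (2*((r+1)*(q+1)) - a) := by
    intro b hb h1 h2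
    rw [← h2, Equiv.symm_apply_apply, h1]
    omega
  have hlt : ∃ m, m < (r+1)*(q+1) ∧
      ((a + (2*m+1) = 2*((r+1)*(q+1))) ∨ (a + 2*m = 2*((r+1)*(q+1)) ∧ 0 < m)) := by
    rcases Nat.even_or_odd' a with ⟨c, hc | hc⟩
    · exact ⟨(r+1)*(q+1) - c, by omega, by omega⟩
    · exact ⟨(r+1)*(q+1) - c - 1, by omega, by omega⟩
  obtain ⟨m, hm, hcase⟩ := hlt
  obtain ⟨j, k, hj, hk, rfl⟩ := dec m hm
  obtain ⟨s, rfl⟩ := Nat.exists_eq_add_of_le hj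
  obtain ⟨t, rfl⟩ := Nat.exists_eq_add_of_le hk
  rcases hcase with h | ⟨h, hpos⟩
  · have e := ho k j (by omega) (by omega)
    have e' := ho' s t (by omega) (by omega)
    have ea : a = 2*((k+t+1)*s+t)+1 := by nlinarith
    have eM : 2*((k+t+1)*(j+s+1)) = (2*(s+(j+s+1)*t)+1) + (2*((j+s+1)*k+j)+1) := by ring
    apply key (2*(s+(j+s+1)*t)+1)
    · omega
    · rw [ea]; exact e'
    · rw [show 2*((k+t+1)*(j+s+1)) - (2*(s+(j+s+1)*t)+1) = 2*((j+s+1)*k+j)+1 by omega, e]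
      omega
  · have hne : ¬(k = 0 ∧ j = 0) := by
      rintro ⟨rfl, rfl⟩
      simp at hpos
    have e := he k j (by omega) (by omega) hne
    have e' := he' j k (by omega) (by omega) (fun h => hne ⟨h.2, h.1⟩)
    rw [Nat.add_sub_cancel_left, Nat.add_sub_cancel_left] at e e'
    have ea : a = 2*((k+t+1)*s+t+1) := by nlinarith
    have eM : 2*((k+t+1)*(j+s+1)) = 2*(j+(j+s+1)*k) + 2*((j+s+1)*t+s+1) := by ring
    apply key (2*(j+(j+s+1)*k))
    · omega
    · rw [ea]; exact e'
    · rw [show 2*((k+t+1)*(j+s+1)) - 2*(j+(j+s+1)*k) = 2*((j+s+1)*t+s+1) by omega, e]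
      omega
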